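/- Let n be an odd positive integer, q = 3^n, and let F_q be the field with q elements. Let E be a nonsingular Weierstrass curve over F_q whose j-invariant does not lie in the prime field F_3 (i.e., j(E) is not the image of any element of ℤ/3ℤ), and let a = q + 1 − N where N is the number of F_q-rational points of E (including infinity). Then there exist a1, a3 ∈ F_q such that the projective plane quartic C_{a1,a3} : a1·T1⁴ + a3·T1·T3 + T2² = 0 is smooth and its number of points [X:Y:Z] ∈ ℙ²(F_q) equals q + 1 − 3·a. -/

import Mathlib

/-!
Write `T1, T2, T3` for the elementary symmetric functions of `X, Y, Z`. Apart from `[1 : 1 : 1]`,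
every rational point of the quartic satisfies `T1 ≠ 0` and is normalised by `T1 = 1`. Then
`s = T2` determines `T3 = -(a1 + s²) / a3`, and the points above `s` are the orderings of the roots
of `t³ - t² + s t - T3`. Replacing `t` by `u = t + s` turns this cubic into `u³ - u² + D(s)`, whose
discriminant is `D(s)`; a cubic with `r` roots and discriminant `D` has `2 r - 1 + χ(D)` orderings
of its roots in `F` (`sum_cubic_roots`). Summing `χ(D(s))` over `s` gives one elliptic character
sum, and summing `r`, by counting pairs `(s, t)` on a curve quadratic in `s`, gives another
(`quarticCard_eq`).

With `S(b, a) = ∑ χ(x³ + b x² + a)`, the first sum is `S(B, a1 a3⁵)` and the second one is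
`S(B, -a1 a3²)`, where `B = a3 (a3 + 1)`. Since `S(b, a) = S(u² b, u⁶ a)` and
`S(b, a) = S(b³, a³)` by Frobenius, the two sums agree as soon as one curve is the Frobenius twist
of the other. This happens for two families, both with `a3` minus a square:
`a3 = -c², a1 = c⁵ (1 - c²)³`, where the curve has `j = -1 / c³`, and
`a3 = -e², a1 = (1 - e²)³ / e⁷`, where it has `j = -e⁹`. For a given `j` outside the prime field
they realise the twists by `-(1 - c²)` and by `1 - c²`; as `-1` is not a square in a field with
`3 ^ n` elements, `n` odd, one of them is the given elliptic curve (`exists_quartic`).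
-/

open MvPolynomial

/-- The plane quartic `a1·T1⁴ + a3·T1·T3 + T2²` as a polynomial in three homogeneous
coordinates, where `T1 = X+Y+Z`, `T2 = XY+YZ+ZX`, `T3 = XYZ`. -/
noncomputable def quarticD (F : Type*) [Field F] (a1 a3 : F) : MvPolynomial (Fin 3) F :=
  C a1 * (X 0 + X 1 + X 2) ^ 4
    + C a3 * (X 0 + X 1 + X 2) * (X 0 * X 1 * X 2)
    + (X 0 * X 1 + X 1 * X 2 + X 2 * X 0) ^ 2

/-- A plane quartic is smooth if, over an algebraic closure, the quartic form and its three
partial derivatives have no common nontrivial zero. -/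
def QuarticSmooth (F : Type*) [Field F] (q : MvPolynomial (Fin 3) F) : Prop :=
  ¬ ∃ v : Fin 3 → AlgebraicClosure F, v ≠ 0 ∧
      eval v (MvPolynomial.map (algebraMap F (AlgebraicClosure F)) q) = 0 ∧
      ∀ i : Fin 3,
        eval v (MvPolynomial.map (algebraMap F (AlgebraicClosure F)) (pderiv i q)) = 0

/-- The number of points of the projective plane curve `q = 0` over `F`. -/
noncomputable def quarticCard (F : Type*) [Field F] (q : MvPolynomial (Fin 3) F) : ℕ :=
  Nat.card {P : Projectivization F (Fin 3 → F) // eval P.rep q = 0}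

/-! ### Character sums of cubics in characteristic three -/

lemma three_eq_zero_of_char_three {F : Type*} [Field F] [CharP F 3] : (3 : F) = 0 := by
  exact_mod_cast CharP.cast_eq_zero F 3

lemma add_cube {F : Type*} [Field F] [CharP F 3] (x y : F) :
    (x + y) ^ 3 = x ^ 3 + y ^ 3 := by
  linear_combination (x ^ 2 * y + x * y ^ 2) * (three_eq_zero_of_char_three : (3 : F) = 0)

lemma cube_bijective {F : Type*} [Field F] [Fintype F] [CharP F 3] :
    Function.Bijective fun x : F => x ^ 3 := by
  have : Fact (Nat.Prime 3) := ⟨Nat.prime_three⟩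
  exact (frobeniusEquiv F 3).bijective

section CharThree

variable {F : Type*} [Field F] [Fintype F] [DecidableEq F] [CharP F 3]

/-- `B ^ 2 - C` is the discriminant because `4 = 1`. -/
lemma card_quadratic (B C : F) :
    (Nat.card {y : F // y ^ 2 + B * y + C = 0} : ℤ) = quadraticChar F (B ^ 2 - C) + 1 := by
  have h3 : (3 : F) = 0 := three_eq_zero_of_char_three
  have hc : ringChar F ≠ 2 := by
    rw [ringChar.eq F 3]; norm_num
  rw [← quadraticChar_card_sqrts hc, Set.toFinset_card, ← Nat.card_eq_fintype_card]
  congr 1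
  refine Nat.card_congr ((Equiv.subRight B).subtypeEquiv fun y => ?_)
  simp only [Equiv.subRight_apply, Set.mem_ofPred_eq]
  constructor
  · intro h
    linear_combination h - B * y * h3
  · intro h
    linear_combination h + B * y * h3

/-- The character sum of the cubic `x³ + b x² + a`; it is minus the trace of Frobenius of
`y² = x³ + b x² + a` when that curve is nonsingular. -/
def cubicSum (F : Type*) [Field F] [Fintype F] [DecidableEq F] (b a : F) : ℤ :=
  ∑ x : F, quadraticChar F (x ^ 3 + b * x ^ 2 + a)

lemma cubicSum_scale {F : Type*} [Field F] [Fintype F] [DecidableEq F]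
    {u : F} (hu : u ≠ 0) (b a : F) :
    cubicSum F (u ^ 2 * b) (u ^ 6 * a) = cubicSum F b a := by
  unfold cubicSum
  refine (Equiv.sum_comp (Equiv.mulLeft₀ (u ^ 2) (pow_ne_zero 2 hu)) _).symm.trans ?_
  refine Finset.sum_congr rfl fun x _ => ?_
  have : (u ^ 2 * x) ^ 3 + u ^ 2 * b * (u ^ 2 * x) ^ 2 + u ^ 6 * a
      = (u ^ 3) ^ 2 * (x ^ 3 + b * x ^ 2 + a) := by ring
  rw [Equiv.mulLeft₀_apply, this, map_mul, quadraticChar_sq_one' (pow_ne_zero 3 hu), one_mul]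

/-- Invariance of the character sum under the Frobenius twist of the curve. -/
lemma cubicSum_frobenius (b a : F) : cubicSum F (b ^ 3) (a ^ 3) = cubicSum F b a := by
  unfold cubicSum
  refine (Equiv.sum_comp (Equiv.ofBijective _ (cube_bijective (F := F))) _).symm.trans ?_
  refine Finset.sum_congr rfl fun x _ => ?_
  have : (x ^ 3) ^ 3 + b ^ 3 * (x ^ 3) ^ 2 + a ^ 3 = (x ^ 3 + b * x ^ 2 + a) ^ 3 := by
    rw [add_cube, add_cube]; ring
  rw [Equiv.ofBijective_apply, this, map_pow]
  by_cases h0 : x ^ 3 + b * x ^ 2 + a = 0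
  · simp [h0]
  · rcases quadraticChar_dichotomy h0 with h | h <;> rw [h] <;> norm_num

/-! ### Roots of `u³ - u² + D` -/

/-- If `D` is not a square then `u² - u³ = D` has exactly one root: in terms of `w = 1 / u` the
equation is `w³ - w / D = -1 / D`, whose left-hand side is additive with trivial kernel. -/
lemma card_cubic_of_not_isSquare {D : F} (hD : ¬ IsSquare D) :
    (Finset.univ.filter fun u : F => u ^ 2 - u ^ 3 = D).card = 1 := by
  have hD0 : D ≠ 0 := by rintro rfl; exact hD IsSquare.zero
  have hinj : Function.Injective fun w : F => D * w ^ 3 - w := by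
    intro v w h
    by_contra hne
    have hs : v - w ≠ 0 := sub_ne_zero.2 hne
    have hc : (v - w) ^ 3 = v ^ 3 - w ^ 3 := by
      have := add_cube (v - w) w
      rw [sub_add_cancel] at this
      linear_combination -this
    have h1 : (v - w) * (D * (v - w) ^ 2 - 1) = 0 := by
      simp only at h
      linear_combination h + D * hc
    have h2 : D * (v - w) ^ 2 = 1 := by
      simpa [hs, sub_eq_zero] using h1
    exact hD ⟨(v - w)⁻¹, by field_simp; linear_combination h2⟩
  obtain ⟨w, hw⟩ := (Finite.injective_iff_surjective.1 hinj) (-1)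
  simp only at hw
  have hw0 : w ≠ 0 := by rintro rfl; simp at hw
  rw [Finset.card_eq_one]
  refine ⟨w⁻¹, ?_⟩
  ext u
  simp only [Finset.mem_filter, Finset.mem_univ, true_and, Finset.mem_singleton]
  constructor
  · intro hu
    have hu0 : u ≠ 0 := by rintro rfl; exact hD0 (by simpa using hu.symm)
    have : D * u⁻¹ ^ 3 - u⁻¹ = -1 := by
      field_simp
      linear_combination -hu
    have := hinj (this.trans hw.symm)
    rw [← this, inv_inv]
  · rintro rfl
    field_simp
    linear_combination -hw

/-- The number of orderings of the three roots of `u³ - u² + D` in `F` (left) expressed through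
the number of its roots and the quadratic character of its discriminant `D`. -/
lemma sum_cubic_roots (D : F) :
    ∑ u ∈ Finset.univ.filter (fun u : F => u ^ 2 - u ^ 3 = D), (quadraticChar F (1 - u) + 1)
      = 2 * ((Finset.univ.filter fun u : F => u ^ 2 - u ^ 3 = D).card : ℤ) - 1
        + quadraticChar F D := by
  by_cases hD0 : D = 0
  · subst hD0
    have : (Finset.univ.filter fun u : F => u ^ 2 - u ^ 3 = 0) = {0, 1} := by
      ext u
      simp only [Finset.mem_filter, Finset.mem_univ, true_and, Finset.mem_insert,
        Finset.mem_singleton]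
      constructor
      · intro h
        have : u ^ 2 * (1 - u) = 0 := by linear_combination h
        rcases mul_eq_zero.1 this with h | h
        · exact Or.inl (by simpa using h)
        · exact Or.inr (sub_eq_zero.1 h).symm
      · rintro (rfl | rfl) <;> simp
    rw [this, Finset.sum_pair zero_ne_one, Finset.card_pair zero_ne_one]
    simp
  · have key : ∀ u ∈ Finset.univ.filter (fun u : F => u ^ 2 - u ^ 3 = D),
        quadraticChar F (1 - u) + 1 = quadraticChar F D + 1 := by
      intro u hu
      simp only [Finset.mem_filter, Finset.mem_univ, true_and] at hu
      have hu0 : u ≠ 0 := by rintro rfl; exact hD0 (by simpa using hu.symm)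
      rw [← hu, show u ^ 2 - u ^ 3 = u ^ 2 * (1 - u) by ring, map_mul,
        quadraticChar_sq_one' hu0, one_mul]
    rw [Finset.sum_congr rfl key, Finset.sum_const, nsmul_eq_mul]
    rcases quadraticChar_dichotomy hD0 with h | h
    · rw [h]; ring
    · rw [h, card_cubic_of_not_isSquare (quadraticChar_neg_one_iff_not_isSquare.1 h)]
      norm_num


/-! ### Points on elliptic curves -/

/-- In characteristic three every elliptic curve with `j ≠ 0` has a model `y² = x³ + b x² + a`,
from which its point count and its `j`-invariant can be read off. -/
lemma exists_cubicSum_of_j_ne_zero (E : WeierstrassCurve F) [E.IsElliptic] (hj : E.j ≠ 0) :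
    ∃ b a : F, b ≠ 0 ∧ a ≠ 0 ∧ E.j * a = - b ^ 3 ∧
      (Nat.card E.toAffine.Point : ℤ) = Fintype.card F + 1 + cubicSum F b a := by
  have h3 : (3 : F) = 0 := three_eq_zero_of_char_three
  have hΔ : E.Δ ≠ 0 := E.coe_Δ' ▸ E.Δ'.ne_zero
  have hjΔ : E.j * E.Δ = E.c₄ ^ 3 := by
    rw [WeierstrassCurve.j, ← E.coe_Δ', mul_right_comm, Units.inv_mul, one_mul]
  have hc₄ : E.c₄ = E.b₂ ^ 2 := by
    rw [WeierstrassCurve.c₄]; linear_combination (-8 * E.b₄) * h3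
  have hb : E.b₂ ≠ 0 := by
    intro h
    apply hj
    have : E.j * E.Δ = 0 := by rw [hjΔ, hc₄, h]; simp
    exact (mul_eq_zero.1 this).resolve_right hΔ
  -- the shift `x ↦ x + r` kills the linear term of `x³ + b₂ x² - b₄ x + b₆`
  obtain ⟨r, hr⟩ : ∃ r, r * E.b₂ = -E.b₄ := ⟨-E.b₄ / E.b₂, by field_simp⟩
  set A := r ^ 3 + E.b₂ * r ^ 2 - E.b₄ * r + E.b₆ with hA
  have hΔA : E.Δ = - E.b₂ ^ 3 * A := by
    have hb₈ : E.b₈ = E.b₂ * E.b₆ - E.b₄ ^ 2 := by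
      linear_combination E.b_relation - E.b₈ * h3
    rw [WeierstrassCurve.Δ, hb₈, hA]
    have hb₄ : E.b₄ = - (r * E.b₂) := by rw [hr, neg_neg]
    rw [hb₄]
    linear_combination (r ^ 3 * E.b₂ ^ 3 * 3 + E.b₂ ^ 4 * r ^ 2 - 9 * E.b₆ ^ 2
      - 3 * E.b₂ ^ 2 * E.b₆ * r) * h3
  refine ⟨E.b₂, A, hb, ?_, ?_, ?_⟩
  · intro h; apply hΔ; rw [hΔA, h, mul_zero]
  · rw [hΔA, hc₄] at hjΔ
    apply mul_left_cancel₀ (pow_ne_zero 3 hb)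
    linear_combination -hjΔ
  · let e : E.toAffine.Point ≃ Option (Σ x : F, {y : F // y ^ 2 + (E.a₁ * x + E.a₃) * y
        + -(x ^ 3 + E.a₂ * x ^ 2 + E.a₄ * x + E.a₆) = 0}) :=
      { toFun := fun P => match P with
          | .zero => none
          | .some x y h => some ⟨x, y, by
              have := (E.toAffine.equation_iff x y).1 h.1
              linear_combination this⟩
        invFun := fun P => match P with
          | none => .zero
          | some ⟨x, y, h⟩ => .some x y (by
              refine WeierstrassCurve.Affine.equation_iff_nonsingular.1
                ((E.toAffine.equation_iff x y).2 ?_)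
              linear_combination h)
        left_inv := by rintro (_ | ⟨x, y, h⟩) <;> rfl
        right_inv := by rintro (_ | ⟨x, y, h⟩) <;> rfl }
    rw [Nat.card_congr e, Finite.card_option, Nat.card_sigma]
    push_cast
    simp only [card_quadratic]
    rw [Finset.sum_add_distrib]
    simp only [Finset.sum_const, Finset.card_univ, nsmul_eq_mul, mul_one]
    have : ∑ x : F, quadraticChar F ((E.a₁ * x + E.a₃) ^ 2
        - -(x ^ 3 + E.a₂ * x ^ 2 + E.a₄ * x + E.a₆)) = cubicSum F E.b₂ A := by
      unfold cubicSum
      refine (Equiv.sum_comp (Equiv.addRight r) _).symm.trans ?_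
      refine Finset.sum_congr rfl fun x _ => ?_
      congr 1
      rw [Equiv.coe_addRight, hA]
      have h1 : E.b₂ = E.a₁ ^ 2 + E.a₂ := by
        rw [WeierstrassCurve.b₂]; linear_combination E.a₂ * h3
      have h2 : E.b₄ = - E.a₄ + E.a₁ * E.a₃ := by
        rw [WeierstrassCurve.b₄]; linear_combination E.a₄ * h3
      have h4 : E.b₆ = E.a₃ ^ 2 + E.a₆ := by
        rw [WeierstrassCurve.b₆]; linear_combination E.a₆ * h3
      have h5 : r * E.b₂ + E.b₄ = 0 := by rw [hr]; ring
      rw [h4]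
      linear_combination (r * x ^ 2 + r ^ 2 * x + E.a₁ * E.a₃ * (x + r) + E.b₂ * r * x) * h3
        - x * h5 - (x + r) ^ 2 * h1 + (x + r) * h2
    rw [this]
    ring

/-! ### Smoothness of the quartic -/

lemma eval_quarticD {F : Type*} [Field F] (a1 a3 : F) (v : Fin 3 → F) :
    eval v (quarticD F a1 a3) = a1 * (v 0 + v 1 + v 2) ^ 4
      + a3 * (v 0 + v 1 + v 2) * (v 0 * v 1 * v 2)
      + (v 0 * v 1 + v 1 * v 2 + v 2 * v 0) ^ 2 := by
  simp [quarticD]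

lemma eval_quarticD_smul_eq_zero_iff {F : Type*} [Field F] (a1 a3 : F) {c : F} (hc : c ≠ 0)
    (v : Fin 3 → F) :
    eval (c • v) (quarticD F a1 a3) = 0 ↔ eval v (quarticD F a1 a3) = 0 := by
  have : eval (c • v) (quarticD F a1 a3) = c ^ 4 * eval v (quarticD F a1 a3) := by
    simp only [eval_quarticD, Pi.smul_apply, smul_eq_mul]; ring
  rw [this, mul_eq_zero, or_iff_right (pow_ne_zero 4 hc)]

lemma eval_mk_rep_eq_zero_iff {F : Type*} [Field F] (a1 a3 : F) (v : Fin 3 → F) (hv : v ≠ 0) :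
    eval (Projectivization.mk F v hv).rep (quarticD F a1 a3) = 0
      ↔ eval v (quarticD F a1 a3) = 0 := by
  obtain ⟨c, hc⟩ := Projectivization.exists_smul_eq_mk_rep F v hv
  rw [← hc, Units.smul_def, eval_quarticD_smul_eq_zero_iff a1 a3 c.ne_zero]


/-- Singular points with two equal coordinates, with `α, γ` standing for `a1, a3`. -/
lemma singular_of_eq {K : Type*} [Field K] [CharP K 3] {α γ x z : K} (hα : α ≠ 0) (hγ : γ ≠ 0)
    (hγ' : γ + 1 ≠ 0)
    (dx : α * (4 * (x + x + z) ^ 3) + γ * (x * x * z) + γ * (x + x + z) * (x * z)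
      + 2 * (x * x + x * z + z * x) * (x + z) = 0)
    (dz : α * (4 * (x + x + z) ^ 3) + γ * (x * x * z) + γ * (x + x + z) * (x * x)
      + 2 * (x * x + x * z + z * x) * (x + x) = 0) : x = 0 ∧ z = 0 := by
  have t : (3 : K) = 0 := three_eq_zero_of_char_three
  have h : (γ + 1) * (x * (z - x) ^ 2) = 0 := by
    linear_combination dx - dz + (-γ * x ^ 2 * z + γ * x ^ 3 - x * z ^ 2 + x ^ 3) * t
  rcases mul_eq_zero.1 ((mul_eq_zero.1 h).resolve_left hγ') with rfl | h
  · have : α * z ^ 3 = 0 := by linear_combination dx - α * z ^ 3 * t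
    simpa [hα] using this
  · obtain rfl : z = x := sub_eq_zero.1 (by simpa using h)
    have : γ * z ^ 3 = 0 := by
      linear_combination dx - (36 * α * z ^ 3 + γ * z ^ 3 + 4 * z ^ 3) * t
    simpa [hγ] using this

/-- The partial derivatives are `A + B·yz + C·(y + z)` and its permutations, with `A, B, C`
symmetric, so at a singular point two coordinates agree: otherwise `B = C = 0`, that is
`T1 = T2 = 0`, and in characteristic three this forces `x = y = z`. -/
lemma singular_eq_zero {K : Type*} [Field K] [CharP K 3] {α γ x y z : K} (hα : α ≠ 0)
    (hγ : γ ≠ 0) (hγ' : γ + 1 ≠ 0)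
    (dx : α * (4 * (x + y + z) ^ 3) + γ * (x * y * z) + γ * (x + y + z) * (y * z)
      + 2 * (x * y + y * z + z * x) * (y + z) = 0)
    (dy : α * (4 * (x + y + z) ^ 3) + γ * (x * y * z) + γ * (x + y + z) * (x * z)
      + 2 * (x * y + y * z + z * x) * (x + z) = 0)
    (dz : α * (4 * (x + y + z) ^ 3) + γ * (x * y * z) + γ * (x + y + z) * (x * y)
      + 2 * (x * y + y * z + z * x) * (x + y) = 0) : x = 0 ∧ y = 0 ∧ z = 0 := by
  have t : (3 : K) = 0 := three_eq_zero_of_char_three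
  by_cases hxy : x = y
  · subst hxy
    obtain ⟨rfl, rfl⟩ := singular_of_eq (x := x) (z := z) hα hγ hγ'
      (by linear_combination dx) (by linear_combination dz)
    simp
  by_cases hxz : x = z
  · subst hxz
    obtain ⟨rfl, rfl⟩ := singular_of_eq (x := x) (z := y) hα hγ hγ'
      (by linear_combination dx) (by linear_combination dy)
    simp
  by_cases hyz : y = z
  · subst hyz
    obtain ⟨rfl, rfl⟩ := singular_of_eq (x := y) (z := x) hα hγ hγ'
      (by linear_combination dy) (by linear_combination dx)
    simp
  exfalso
  have e1 : γ * (x + y + z) * z + 2 * (x * y + y * z + z * x) = 0 := by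
    apply mul_left_cancel₀ (sub_ne_zero.2 hxy)
    linear_combination dy - dx
  have e2 : γ * (x + y + z) * y + 2 * (x * y + y * z + z * x) = 0 := by
    apply mul_left_cancel₀ (sub_ne_zero.2 hxz)
    linear_combination dz - dx
  have e3 : γ * (x + y + z) = 0 := by
    apply mul_left_cancel₀ (sub_ne_zero.2 hyz)
    linear_combination e2 - e1
  have e4 : x + y + z = 0 := (mul_eq_zero.1 e3).resolve_left hγ
  have e5 : (x - y) ^ 2 = 0 := by
    linear_combination e1 - z * e3 - 2 * (x + y) * e4 + (x ^ 2 + y ^ 2) * t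
  exact hxy (sub_eq_zero.1 (by simpa using e5))

lemma quarticD_smooth {F : Type*} [Field F] [CharP F 3] {a1 a3 : F} (h1 : a1 ≠ 0) (h3 : a3 ≠ 0)
    (h3' : a3 ≠ -1) : QuarticSmooth F (quarticD F a1 a3) := by
  rintro ⟨v, hv, -, hd⟩
  have : CharP (AlgebraicClosure F) 3 := charP_of_injective_algebraMap
    (algebraMap F (AlgebraicClosure F)).injective 3
  have t : (3 : AlgebraicClosure F) = 0 := three_eq_zero_of_char_three
  set φ := algebraMap F (AlgebraicClosure F)
  have g1 : φ a1 ≠ 0 := by simpa using h1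
  have g3 : φ a3 ≠ 0 := by simpa using h3
  have g3' : φ a3 + 1 ≠ 0 := by
    rw [← map_one φ, ← map_add]
    exact (map_ne_zero φ).2 fun h => h3' (eq_neg_of_add_eq_zero_left h)
  have d0 := hd 0
  have d1 := hd 1
  have d2 := hd 2
  simp [quarticD, pderiv_X] at d0 d1 d2
  obtain ⟨e0, e1, e2⟩ := singular_eq_zero (x := v 0) (y := v 1) (z := v 2) g1 g3 g3'
    (by linear_combination d0) (by linear_combination d1) (by linear_combination d2)
  apply hv
  ext k
  fin_cases k <;> assumption

/-! ### Point count of the quartic -/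

/-- A zero of the quartic with `T1 ≠ 0`, rescaled to `T1 = 1` and written in terms of `s = T2`,
`u = Z + s` and `x = X`. -/
lemma exists_normalized {F : Type*} [Field F] [CharP F 3] {a1 a3 X Y Z : F} (h3 : a3 ≠ 0)
    (hT : X + Y + Z ≠ 0)
    (hP : a1 * (X + Y + Z) ^ 4 + a3 * (X + Y + Z) * (X * Y * Z)
      + (X * Y + Y * Z + Z * X) ^ 2 = 0) :
    ∃ c s u x : F, u ^ 2 - u ^ 3 = s ^ 2 - s ^ 3 + (a1 + s ^ 2) / a3 ∧
      x ^ 2 + (u - s - 1) * x + (s - (u - s) * (1 - u + s)) = 0 ∧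
      c * X = x ∧ c * Y = 1 - x - (u - s) ∧ c * Z = u - s := by
  have t : (3 : F) = 0 := three_eq_zero_of_char_three
  obtain ⟨c, hcT⟩ : ∃ c, c * (X + Y + Z) = 1 := ⟨_, inv_mul_cancel₀ hT⟩
  obtain ⟨x, hx⟩ : ∃ x, x = c * X := ⟨_, rfl⟩
  obtain ⟨y, hy⟩ : ∃ y, y = c * Y := ⟨_, rfl⟩
  obtain ⟨z, hz⟩ : ∃ z, z = c * Z := ⟨_, rfl⟩
  have hxyz : x + y + z = 1 := by rw [← hcT, hx, hy, hz]; ring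
  have hQ : a1 * (x + y + z) ^ 4 + a3 * (x + y + z) * (x * y * z)
      + (x * y + y * z + z * x) ^ 2 = 0 := by
    rw [hx, hy, hz]
    linear_combination c ^ 4 * hP
  rw [hxyz] at hQ
  have hyxz : y = 1 - x - z := by linear_combination hxyz
  obtain ⟨s, hs⟩ : ∃ s, s = x * y + y * z + z * x := ⟨_, rfl⟩
  refine ⟨c, s, z + s, x, ?_, ?_, hx.symm, ?_, ?_⟩
  · have h : a1 + s ^ 2 = a3 * ((z + s) ^ 2 - (z + s) ^ 3 - s ^ 2 + s ^ 3) := by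
      rw [← hs, hyxz] at hQ
      rw [hyxz] at hs
      linear_combination hQ + a3 * z * hs
        - a3 * ((z + s) * s - s ^ 2 - (z + s) ^ 2 * s + (z + s) * s ^ 2) * t
    rw [h, mul_div_cancel_left₀ _ h3]
    ring
  · rw [hs, hyxz]; ring
  · rw [add_sub_cancel_right, ← hyxz, hy]
  · rw [add_sub_cancel_right, hz]

/-- Projective points of the quartic, besides `[1 : 1 : 1]` (the only one with `T1 = 0`), are
normalised by `T1 = 1` and parametrised by `s = T2`, `u = Z + s` and `X`; the conditions say that
`Z` is a root of `t³ - T1 t² + T2 t - T3`, and `X` of the complementary quadratic factor. -/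
lemma quarticCard_eq_sigma {F : Type*} [Field F] [CharP F 3] {a1 a3 : F} (h3 : a3 ≠ 0) :
    quarticCard F (quarticD F a1 a3) = Nat.card (Option (Σ s : F,
      Σ u : {u : F // u ^ 2 - u ^ 3 = s ^ 2 - s ^ 3 + (a1 + s ^ 2) / a3},
        {x : F // x ^ 2 + (u.1 - s - 1) * x + (s - (u.1 - s) * (1 - u.1 + s)) = 0})) := by
  have t : (3 : F) = 0 := three_eq_zero_of_char_three
  have hone : (fun _ => 1 : Fin 3 → F) ≠ 0 := fun h => one_ne_zero (congrFun h 0)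
  have hne : ∀ x z : F, (![x, 1 - x - z, z] : Fin 3 → F) ≠ 0 := by
    intro x z h
    have h0 := congrFun h 0
    have h1 := congrFun h 1
    have h2 := congrFun h 2
    simp at h0 h1 h2
    rw [h0, h2] at h1
    simp at h1
  symm
  refine Nat.card_congr (Equiv.ofBijective
    (fun w => match w with
      | none => ⟨Projectivization.mk F (fun _ => 1) hone, ?_⟩
      | some ⟨s, u, x⟩ => ⟨Projectivization.mk F ![x.1, 1 - x.1 - (u.1 - s), u.1 - s]
          (hne _ _), ?_⟩) ⟨?_, ?_⟩)
  · rw [eval_mk_rep_eq_zero_iff, eval_quarticD]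
    linear_combination (a1 * 27 + a3 + 3) * t
  · rw [eval_mk_rep_eq_zero_iff, eval_quarticD]
    obtain ⟨u, hu⟩ := u
    obtain ⟨x, hx⟩ := x
    have hu' : a3 * (u ^ 2 - u ^ 3 - s ^ 2 + s ^ 3) = a1 + s ^ 2 := by
      have hdiv := mul_div_cancel₀ (a1 + s ^ 2) h3
      linear_combination a3 * hu + hdiv
    simp only [Matrix.cons_val_zero, Matrix.cons_val_one, Matrix.cons_val]
    linear_combination -hu' - (a3 * (u - s)
      + (x * (1 - x - (u - s)) + (u - s) * (1 - (u - s))) + s) * hx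
      + a3 * (u * s - s ^ 2 - u ^ 2 * s + u * s ^ 2) * t
  · have hsum : ∀ {v w : Fin 3 → F} {hv hw},
        Projectivization.mk F v hv = Projectivization.mk F w hw →
        ∃ c : F, ∀ i, c * w i = v i := by
      intro v w hv hw h
      obtain ⟨c, hc⟩ := (Projectivization.mk_eq_mk_iff' F v w hv hw).1 h
      exact ⟨c, fun i => congrFun hc i⟩
    rintro (_ | ⟨s, ⟨u, hu⟩, ⟨x, hx⟩⟩) (_ | ⟨s', ⟨u', hu'⟩, ⟨x', hx'⟩⟩) h
    · rfl
    · exfalso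
      obtain ⟨c, hc⟩ := hsum (congrArg Subtype.val h).symm
      have h0 := hc 0
      have h1 := hc 1
      have h2 := hc 2
      simp at h0 h1 h2
      apply one_ne_zero (α := F)
      linear_combination - h0 - h1 - h2 + c * t
    · exfalso
      obtain ⟨c, hc⟩ := hsum (congrArg Subtype.val h)
      have h0 := hc 0
      have h1 := hc 1
      have h2 := hc 2
      simp at h0 h1 h2
      apply one_ne_zero (α := F)
      linear_combination - h0 - h1 - h2 + c * t
    · obtain ⟨c, hc⟩ := hsum (congrArg Subtype.val h)
      have h0 := hc 0
      have h1 := hc 1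
      have h2 := hc 2
      simp at h0 h1 h2
      have hc1 : c = 1 := by linear_combination h0 + h1 + h2
      subst hc1
      rw [one_mul] at h0 h2
      subst h0
      have hs : s = s' := by
        linear_combination hx - hx' + (u - s + (u' - s') + x' - 1) * h2
      subst hs
      obtain rfl : u' = u := by linear_combination h2
      rfl
  · rintro ⟨P, hP⟩
    induction P using Projectivization.ind with
    | h v hv =>
    rw [eval_mk_rep_eq_zero_iff, eval_quarticD] at hP
    by_cases hT : v 0 + v 1 + v 2 = 0
    · refine ⟨none, Subtype.ext ((Projectivization.mk_eq_mk_iff' F _ _ _ _).2 ?_)⟩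
      have hT2 : (v 0 - v 1) ^ 2 = 0 := by
        have hP2 : v 0 * v 1 + v 1 * v 2 + v 2 * v 0 = 0 := by
          rw [hT] at hP
          simpa using hP
        linear_combination 2 * hP2 - 2 * (v 0 + v 1) * hT + (v 0 ^ 2 + v 1 ^ 2) * t
      have e1 : v 0 = v 1 := sub_eq_zero.1 (by simpa using hT2)
      have e2 : v 2 = v 1 := by linear_combination hT - e1 - v 1 * t
      have hv1 : v 1 ≠ 0 := by
        intro h
        apply hv
        ext k
        fin_cases k
        · exact e1.trans h
        · exact h
        · exact e2.trans h
      refine ⟨(v 1)⁻¹, ?_⟩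
      ext k
      fin_cases k <;> simp [e1, e2, hv1]
    · obtain ⟨c, s, u, x, hu, hxs, h0, h1, h2⟩ := exists_normalized h3 hT hP
      have hvec : c • v = ![x, 1 - x - (u - s), u - s] := by
        ext k
        fin_cases k
        exacts [h0, h1, h2]
      exact ⟨some ⟨s, ⟨u, hu⟩, ⟨x, hxs⟩⟩,
        Subtype.ext ((Projectivization.mk_eq_mk_iff' F _ _ _ _).2 ⟨c, hvec⟩)⟩

/-- The two character sums are those of the quotients of the quartic by a transposition and by
the cyclic group of order three in `S₃`. -/
lemma quarticCard_eq {a1 a3 : F} (h3 : a3 ≠ 0) :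
    (quarticCard F (quarticD F a1 a3) : ℤ) = Fintype.card F + 1
      + 2 * cubicSum F (a3 * (a3 + 1)) (-a1 * a3 ^ 2)
      + cubicSum F (a3 * (a3 + 1)) (a1 * a3 ^ 5) := by
  have t : (3 : F) = 0 := three_eq_zero_of_char_three
  rw [quarticCard_eq_sigma h3, Finite.card_option, Nat.card_sigma]
  push_cast
  have hfib : ∀ s : F, (Nat.card (Σ u :
      {u : F // u ^ 2 - u ^ 3 = s ^ 2 - s ^ 3 + (a1 + s ^ 2) / a3},
      {x : F // x ^ 2 + (u.1 - s - 1) * x + (s - (u.1 - s) * (1 - u.1 + s)) = 0}) : ℤ)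
      = 2 * (Nat.card {u : F // u ^ 2 - u ^ 3 = s ^ 2 - s ^ 3 + (a1 + s ^ 2) / a3} : ℤ) - 1
        + quadraticChar F (s ^ 2 - s ^ 3 + (a1 + s ^ 2) / a3) := by
    intro s
    rw [Nat.card_sigma, Nat.card_eq_fintype_card, Fintype.card_subtype, ← sum_cubic_roots]
    push_cast
    simp only [card_quadratic]
    rw [Finset.sum_subtype (p := fun u : F => u ^ 2 - u ^ 3 = s ^ 2 - s ^ 3 + (a1 + s ^ 2) / a3)
      _ (by simp)]
    refine Finset.sum_congr rfl fun u _ => ?_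
    congr 2
    ring
  rw [Finset.sum_congr rfl fun s _ => hfib s]
  have hroots : ∑ s : F,
      (Nat.card {u : F // u ^ 2 - u ^ 3 = s ^ 2 - s ^ 3 + (a1 + s ^ 2) / a3} : ℤ)
      = Fintype.card F + cubicSum F (a3 * (a3 + 1)) (-a1 * a3 ^ 2) := by
    -- exchange the roles of `s` and `z = u - s`: the equation is quadratic in `s`
    have e : (Σ s : F, {u : F // u ^ 2 - u ^ 3 = s ^ 2 - s ^ 3 + (a1 + s ^ 2) / a3})
        ≃ Σ z : F, {s : F // s ^ 2 + a3 * z * s + (a1 + a3 * (z ^ 3 - z ^ 2)) = 0} := by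
      have key : ∀ s z : F, (z + s) ^ 2 - (z + s) ^ 3 = s ^ 2 - s ^ 3 + (a1 + s ^ 2) / a3
          ↔ s ^ 2 + a3 * z * s + (a1 + a3 * (z ^ 3 - z ^ 2)) = 0 := by
        intro s z
        have hdiv := mul_div_cancel₀ (a1 + s ^ 2) h3
        constructor
        · intro h
          linear_combination -a3 * h - hdiv + a3 * (z * s - z ^ 2 * s - z * s ^ 2) * t
        · intro h
          apply mul_left_cancel₀ h3
          linear_combination -h - hdiv + a3 * (z * s - z ^ 2 * s - z * s ^ 2) * t
      exact
      { toFun := fun p => ⟨p.2.1 - p.1, p.1, (key _ _).1 (by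
          rw [sub_add_cancel]; exact p.2.2)⟩
        invFun := fun p => ⟨p.2.1, p.1 + p.2.1, (key _ _).2 p.2.2⟩
        left_inv := by
          rintro ⟨s, u, h⟩
          simp
        right_inv := by
          rintro ⟨z, s, h⟩
          have hz : z + s - s = z := add_sub_cancel_right z s
          refine Sigma.ext hz ?_
          rw [Subtype.heq_iff_coe_eq]
          intro w
          simp only [hz] }
    have hc := Nat.card_congr e
    rw [Nat.card_sigma, Nat.card_sigma] at hc
    have hc' := congrArg (Nat.cast : ℕ → ℤ) hc
    push_cast at hc'
    rw [hc']
    simp only [card_quadratic]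
    rw [Finset.sum_add_distrib]
    simp only [Finset.sum_const, Finset.card_univ, nsmul_eq_mul, mul_one]
    rw [add_comm]
    congr 1
    have hn : -a3⁻¹ ≠ 0 := by simpa using h3
    refine (Equiv.sum_comp (Equiv.mulLeft₀ (-a3⁻¹) hn) _).symm.trans ?_
    unfold cubicSum
    refine Finset.sum_congr rfl fun x _ => ?_
    have h : x ^ 3 + a3 * (a3 + 1) * x ^ 2 + -a1 * a3 ^ 2 = (a3) ^ 2 * ((a3 * (-a3⁻¹ * x)) ^ 2
        - (a1 + a3 * ((-a3⁻¹ * x) ^ 3 - (-a3⁻¹ * x) ^ 2))) := by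
      field_simp
      ring
    rw [Equiv.mulLeft₀_apply, h, map_mul, quadraticChar_sq_one' h3, one_mul]
  have hdisc : ∑ s : F, quadraticChar F (s ^ 2 - s ^ 3 + (a1 + s ^ 2) / a3)
      = cubicSum F (a3 * (a3 + 1)) (a1 * a3 ^ 5) := by
    have hn : -(a3 ^ 2)⁻¹ ≠ 0 := by simpa using h3
    refine (Equiv.sum_comp (Equiv.mulLeft₀ (-(a3 ^ 2)⁻¹) hn) _).symm.trans ?_
    unfold cubicSum
    refine Finset.sum_congr rfl fun x _ => ?_
    have h : x ^ 3 + a3 * (a3 + 1) * x ^ 2 + a1 * a3 ^ 5 = (a3 ^ 3) ^ 2 * ((-(a3 ^ 2)⁻¹ * x) ^ 2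
        - (-(a3 ^ 2)⁻¹ * x) ^ 3 + (a1 + (-(a3 ^ 2)⁻¹ * x) ^ 2) / a3) := by
      field_simp
      ring
    rw [Equiv.mulLeft₀_apply, h, map_mul, quadraticChar_sq_one' (pow_ne_zero 3 h3), one_mul]
  rw [Finset.sum_add_distrib, Finset.sum_sub_distrib, ← Finset.mul_sum, hroots, hdisc]
  simp only [Finset.sum_const, Finset.card_univ, nsmul_eq_mul, mul_one]
  ring

/-! ### Choice of the parameters -/

/-- The hypothesis says that `y² = x³ + B x² + A`, rescaled by `B`, is the Frobenius twist of
`y² = x³ + B x² + A'`. -/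
lemma cubicSum_eq_of_frobenius {B A A' : F} (hB : B ≠ 0) (h : B ^ 6 * A = A' ^ 3) :
    cubicSum F B A = cubicSum F B A' := by
  rw [← cubicSum_frobenius B A', ← h, show B ^ 3 = B ^ 2 * B by ring, cubicSum_scale hB]

/-- For every curve `y² = x³ + b x² + b³ c³`, whose `j`-invariant is `-1 / c³`, one of the two
families of quartics has a member all of whose elliptic factors have its trace of Frobenius. -/
lemma exists_quartic {b c : F} (hc : c ≠ 0) (hc1 : c ^ 2 ≠ 1)
    (hneg : ¬ IsSquare (-1 : F)) (hb : b ≠ 0) :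
    ∃ a1 a3 : F, a1 ≠ 0 ∧ a3 ≠ 0 ∧ a3 ≠ -1 ∧
      cubicSum F (a3 * (a3 + 1)) (-a1 * a3 ^ 2) = cubicSum F b (b ^ 3 * c ^ 3) ∧
      cubicSum F (a3 * (a3 + 1)) (a1 * a3 ^ 5) = cubicSum F b (b ^ 3 * c ^ 3) := by
  have t : (3 : F) = 0 := three_eq_zero_of_char_three
  have hd : 1 - c ^ 2 ≠ 0 := sub_ne_zero.2 hc1.symm
  have hcases : (∃ w, w ≠ 0 ∧ -(1 - c ^ 2) * b = w ^ 2) ∨ ∃ w, w ≠ 0 ∧ (1 - c ^ 2) * b = w ^ 2 := by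
    have hne : (1 - c ^ 2) * b ≠ 0 := mul_ne_zero hd hb
    have hne' : -(1 - c ^ 2) * b ≠ 0 := mul_ne_zero (neg_ne_zero.2 hd) hb
    have aux : ∀ x : F, x ≠ 0 → IsSquare x → ∃ w, w ≠ 0 ∧ x = w ^ 2 := by
      rintro x hx ⟨w, rfl⟩
      exact ⟨w, left_ne_zero_of_mul hx, (sq w).symm⟩
    by_cases h : IsSquare ((1 - c ^ 2) * b)
    · exact Or.inr (aux _ hne h)
    · refine Or.inl (aux _ hne' ((quadraticChar_one_iff_isSquare hne').1 ?_))
      rw [show -(1 - c ^ 2) * b = -1 * ((1 - c ^ 2) * b) by ring, map_mul,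
        quadraticChar_neg_one_iff_not_isSquare.2 h, quadraticChar_neg_one_iff_not_isSquare.2 hneg]
      norm_num
  rcases hcases with ⟨w, hw0, hw⟩ | ⟨w, hw0, hw⟩
  · have hB : -c ^ 2 * (-c ^ 2 + 1) ≠ 0 := by
      rw [neg_add_eq_sub]
      exact mul_ne_zero (neg_ne_zero.2 (pow_ne_zero _ hc)) hd
    have key : cubicSum F (-c ^ 2 * (-c ^ 2 + 1)) (-(c ^ 5 * (1 - c ^ 2) ^ 3) * (-c ^ 2) ^ 2)
        = cubicSum F b (b ^ 3 * c ^ 3) := by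
      have hu : c * w / b ≠ 0 := div_ne_zero (mul_ne_zero hc hw0) hb
      rw [← cubicSum_scale hu b]
      congr 1
      · rw [div_pow, mul_pow, ← hw]
        field_simp
        ring
      · rw [div_pow, mul_pow, show w ^ 6 = (w ^ 2) ^ 3 by ring, ← hw]
        field_simp
    refine ⟨c ^ 5 * (1 - c ^ 2) ^ 3, -c ^ 2, ?_, ?_, ?_, key, ?_⟩
    · exact mul_ne_zero (pow_ne_zero _ hc) (pow_ne_zero _ hd)
    · exact neg_ne_zero.2 (pow_ne_zero _ hc)
    · exact fun h => hc1 (neg_injective h)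
    · rw [← key]
      exact cubicSum_eq_of_frobenius hB (by ring)
  · obtain ⟨e, he⟩ := (cube_bijective (F := F)).2 c⁻¹
    simp only at he
    -- with `c = 1 / e ^ 3` the `j`-invariant is `-e ^ 9`, as the second family requires
    have he0 : e ≠ 0 := by
      rintro rfl
      exact inv_ne_zero hc (by rw [← he]; ring)
    obtain rfl : c = (e ^ 3)⁻¹ := by rw [he, inv_inv]
    have hf : 1 - e ^ 2 ≠ 0 := by
      intro h
      apply hc1
      have : e ^ 2 = 1 := (sub_eq_zero.1 h).symm
      rw [inv_pow, ← pow_mul, mul_comm, pow_mul, this]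
      simp
    have hw2 : w ^ 2 = -(1 - e ^ 2) ^ 3 * b / e ^ 6 := by
      rw [← hw]
      field_simp
      linear_combination (e ^ 4 - e ^ 2) * t
    have hB : -e ^ 2 * (-e ^ 2 + 1) ≠ 0 := by
      rw [neg_add_eq_sub]
      exact mul_ne_zero (neg_ne_zero.2 (pow_ne_zero _ he0)) hf
    have key : cubicSum F (-e ^ 2 * (-e ^ 2 + 1)) (-((1 - e ^ 2) ^ 3 / e ^ 7) * (-e ^ 2) ^ 2)
        = cubicSum F b (b ^ 3 * (e ^ 3)⁻¹ ^ 3) := by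
      have hu : w * e ^ 4 / ((1 - e ^ 2) * b) ≠ 0 :=
        div_ne_zero (mul_ne_zero hw0 (pow_ne_zero _ he0)) (mul_ne_zero hf hb)
      rw [← cubicSum_scale hu b]
      congr 1
      · rw [div_pow, mul_pow, hw2]
        field_simp
        ring
      · rw [div_pow, mul_pow, show w ^ 6 = (w ^ 2) ^ 3 by ring, hw2]
        field_simp
    refine ⟨(1 - e ^ 2) ^ 3 / e ^ 7, -e ^ 2, ?_, ?_, ?_, key, ?_⟩
    · exact div_ne_zero (pow_ne_zero _ hf) (pow_ne_zero _ he0)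
    · exact neg_ne_zero.2 (pow_ne_zero _ he0)
    · exact fun h => hf (sub_eq_zero.2 (neg_injective h).symm)
    · rw [← key]
      exact (cubicSum_eq_of_frobenius hB (by field_simp; ring)).symm

end CharThree

theorem stmt_14 (n : ℕ) (hn : Odd n) (hpos : 0 < n) (q : ℕ) (hq : q = 3 ^ n)
    (F : Type*) [Field F] [Fintype F] [CharP F 3] (hF : Fintype.card F = q)
    (E : WeierstrassCurve F) (i : E.IsElliptic)
    (hj : ∀ c : ZMod 3, ZMod.castHom (dvd_refl 3) F c ≠ @WeierstrassCurve.j F _ E i)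
    (N : ℕ) (hN : N = Nat.card E.toAffine.Point)
    (a : ℤ) (ha : a = (q : ℤ) + 1 - N) :
    ∃ a1 a3 : F, QuarticSmooth F (quarticD F a1 a3) ∧
      (quarticCard F (quarticD F a1 a3) : ℤ) = (q : ℤ) + 1 - 3 * a := by
  classical
  subst hq hN ha
  have hj0 : E.j ≠ 0 := fun h => hj 0 (by rw [h, map_zero])
  obtain ⟨b, A, hb, hA, hjA, hcard⟩ := exists_cubicSum_of_j_ne_zero E hj0
  obtain ⟨d, hd⟩ := (cube_bijective (F := F)).2 A
  simp only at hd
  have hd0 : d ≠ 0 := by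
    rintro rfl
    exact hA (by rw [← hd]; ring)
  have hneg : ¬ IsSquare (-1 : F) := by
    rw [FiniteField.isSquare_neg_one_iff, hF, not_not]
    obtain ⟨k, rfl⟩ := hn
    rw [pow_succ, pow_mul, Nat.mul_mod, Nat.pow_mod]
    norm_num
  -- the constant `c` is chosen with `A = b ^ 3 * c ^ 3`, so that `j = -1 / c ^ 3`
  have hc1 : (d / b) ^ 2 ≠ 1 := by
    intro h
    rw [div_pow, div_eq_one_iff_eq (pow_ne_zero 2 hb), sq_eq_sq_iff_eq_or_eq_neg] at h
    rcases h with rfl | rfl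
    · refine hj (-1) ?_
      rw [map_neg, map_one]
      apply mul_right_cancel₀ hA
      rw [hjA, ← hd]; ring
    · refine hj 1 ?_
      rw [map_one]
      apply mul_right_cancel₀ hA
      rw [hjA, ← hd]; ring
  obtain ⟨a1, a3, h1, h3, h3', hS, hS'⟩ :=
    exists_quartic (div_ne_zero hd0 hb) hc1 hneg hb
  refine ⟨a1, a3, quarticD_smooth h1 h3 h3', ?_⟩
  have hAc : b ^ 3 * (d / b) ^ 3 = A := by rw [← hd]; field_simp
  rw [quarticCard_eq h3, hS, hS', hAc, hcard, hF]
  push_cast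
  ring
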